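/- Let m ∈ ℕ. The following are equivalent: (i) for every alphabet Σ and every bideterministic weighted automaton A over the ring ℤ/mℤ and Σ, there exists a bideterministic weighted automaton B over ℤ/mℤ with ‖B‖ = ‖A‖ such that B is minimal; (ii) either m = 0, or m = p^k for some prime p and some k ∈ ℕ. -/

import Mathlib

/-- A weighted automaton over a semiring `S` and alphabet `α`:
a finite type of states `Q`, a transition weighting `σ`, an initial
weighting `ι` and a terminal weighting `τ`. -/
structure WeightedAutomaton (S : Type) [Semiring S] (α : Type) : Type 1 where
  Q : Type
  [fintypeQ : Fintype Q]
  σ : Q → α → Q → S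
  ι : Q → S
  τ : Q → S

namespace WeightedAutomaton

attribute [instance] fintypeQ

variable {S : Type} [Semiring S] {α : Type}

/-- The "future" of a state on a word: the sum, over all runs from this state
upon the word, of the product of the transition weights times the terminal
weight of the last state.  (Sequences of states using a zero-weight transition
contribute zero, so this is exactly the sum over runs.) -/
def future (A : WeightedAutomaton S α) : List α → A.Q → S
  | [], q => A.τ q
  | c :: w, q => ∑ p : A.Q, A.σ q c p * A.future w p

/-- The behaviour of a weighted automaton: the series sending each word `w`
to the sum of the monomial weights `ι(q₀)·σ(q₀,c₁,q₁)⋯σ(q_{n−1},cₙ,qₙ)·τ(qₙ)`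
of all runs of the automaton upon `w`. -/
def behaviour (A : WeightedAutomaton S α) (w : List α) : S :=
  ∑ q : A.Q, A.ι q * A.future w q

/-- A weighted automaton is bideterministic if at most one state has nonzero
initial weight, at most one state has nonzero terminal weight, and for every
letter each state has at most one outgoing and at most one incoming transition
with nonzero weight upon that letter. -/
def Bideterministic (A : WeightedAutomaton S α) : Prop :=
  (∀ p q, A.ι p ≠ 0 → A.ι q ≠ 0 → p = q) ∧
  (∀ p q, A.τ p ≠ 0 → A.τ q ≠ 0 → p = q) ∧
  (∀ p c q q', A.σ p c q ≠ 0 → A.σ p c q' ≠ 0 → q = q') ∧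
  (∀ p p' c q, A.σ p c q ≠ 0 → A.σ p' c q ≠ 0 → p = p')

/-- `A.IsPath q l` : starting in state `q`, the list `l` of (letter, next state)
pairs follows transitions all of which have nonzero weight, i.e. it is a run. -/
def IsPath (A : WeightedAutomaton S α) : A.Q → List (α × A.Q) → Prop
  | _, [] => True
  | q, (c, q') :: l => A.σ q c q' ≠ 0 ∧ A.IsPath q' l

/-- The last state of a path. -/
def pathEnd (A : WeightedAutomaton S α) : A.Q → List (α × A.Q) → A.Q
  | q, [] => q
  | _, (_, q') :: l => A.pathEnd q' l

/-- The product of the transition weights along a path. -/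
def pathWeight (A : WeightedAutomaton S α) : A.Q → List (α × A.Q) → S
  | _, [] => 1
  | q, (c, q') :: l => A.σ q c q' * A.pathWeight q' l

/-- A state is accessible if some run from a state with nonzero initial weight
ends in it. -/
def Accessible (A : WeightedAutomaton S α) (q : A.Q) : Prop :=
  ∃ p l, A.ι p ≠ 0 ∧ A.IsPath p l ∧ A.pathEnd p l = q

/-- A state is coaccessible if some run from it ends in a state with nonzero
terminal weight. -/
def Coaccessible (A : WeightedAutomaton S α) (q : A.Q) : Prop :=
  ∃ l, A.IsPath q l ∧ A.τ (A.pathEnd q l) ≠ 0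

/-- A weighted automaton is trim if all its states are accessible and
coaccessible. -/
def Trim (A : WeightedAutomaton S α) : Prop :=
  ∀ q, A.Accessible q ∧ A.Coaccessible q

/-- A weighted automaton is semantically trim if every state lies on some run
whose monomial weight is nonzero. -/
def SemanticallyTrim (A : WeightedAutomaton S α) : Prop :=
  ∀ q, ∃ p l, A.IsPath p l ∧ (q = p ∨ q ∈ l.map Prod.snd) ∧
    A.ι p * A.pathWeight p l * A.τ (A.pathEnd p l) ≠ 0

/-- The number of states of a weighted automaton. -/
def states (A : WeightedAutomaton S α) : ℕ := Fintype.card A.Q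

/-- A weighted automaton is minimal if every weighted automaton over the same
semiring and alphabet with the same behaviour has at least as many states. -/
def Minimal (A : WeightedAutomaton S α) : Prop :=
  ∀ B : WeightedAutomaton S α, B.behaviour = A.behaviour → A.states ≤ B.states

end WeightedAutomaton

/-!
In a bideterministic automaton the word read so far determines the current state, and so does the
word still to be read. Hence, choosing for every state `q` of the useful part a prefix and a suffix
through `q` of nonzero weight, the matrix of the weights of all their concatenations is diagonal
with nonzero diagonal. An equivalent automaton with `r` states factors this matrix through
dimension `r`. When divisibility is total this cannot lower the dimension, by Gaussian elimination
in which the pivot is an entry dividing all others in its row; this covers `ℤ/pᵏℤ`, and `ℤ` through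
its fraction field.

If `m` is neither `0` nor a prime power, `ℤ/mℤ` has nonzero orthogonal idempotents `x` and `y`.
Two states of an automaton which are only ever used with weights in `(x)` and in `(y)`,
respectively, can then be merged, but not bideterministically.
-/

theorem exists_mem_forall_mem_dvd {ι S : Type*} [Monoid S] [PreValuationRing S] {s : Finset ι}
    (hs : s.Nonempty) (f : ι → S) : ∃ i ∈ s, ∀ j ∈ s, f i ∣ f j := by
  induction hs using Finset.Nonempty.cons_induction with
  | singleton a => simp
  | cons a s _ _ ih =>
    obtain ⟨i, hi, hdvd⟩ := ih
    rcases ValuationRing.dvd_total (f a) (f i) with hai | hia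
    · exact ⟨a, by simp, by simpa using fun j hj => hai.trans (hdvd j hj)⟩
    · exact ⟨i, by simp [hi], by simpa [hia] using hdvd⟩

theorem card_le_card_of_sum_mul_diagonal {ι κ S : Type*} [Ring S] [PreValuationRing S]
    (s : Finset ι) (t : Finset κ) (L : ι → κ → S) (R : κ → ι → S)
    (hoff : ∀ i ∈ s, ∀ j ∈ s, i ≠ j → ∑ k ∈ t, L i k * R k j = 0)
    (hdiag : ∀ i ∈ s, ∑ k ∈ t, L i k * R k i ≠ 0) : s.card ≤ t.card := by
  classical
  induction t using Finset.induction_on generalizing s R with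
  | empty =>
    have hs : s = ∅ := Finset.eq_empty_of_forall_notMem fun i hi => hdiag i hi Finset.sum_empty
    simp [hs]
  | insert k₀ t hk₀ ih =>
    rcases s.eq_empty_or_nonempty with rfl | hs
    · simp
    obtain ⟨j₀, hj₀, hdvd⟩ := exists_mem_forall_mem_dvd hs (R k₀)
    choose! c hc using hdvd
    -- Subtracting multiples of the column `j₀` clears the row `k₀`; outside the row `j₀` of `L`
    -- the product does not notice, because the column `j₀` of `L * R` vanishes there.
    have sum_eliminated : ∀ i ∈ s.erase j₀, ∀ j ∈ s.erase j₀,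
        ∑ k ∈ t, L i k * (R k j - R k j₀ * c j) = ∑ k ∈ insert k₀ t, L i k * R k j := by
      intro i hi j hj
      obtain ⟨hij₀, his⟩ := Finset.mem_erase.mp hi
      have hcolumn := hoff i his j₀ hj₀ hij₀
      calc ∑ k ∈ t, L i k * (R k j - R k j₀ * c j)
        _ = ∑ k ∈ insert k₀ t, L i k * (R k j - R k j₀ * c j) := by
          simp [Finset.sum_insert hk₀, ← hc j (Finset.mem_of_mem_erase hj)]
        _ = ∑ k ∈ insert k₀ t, L i k * R k j
            - (∑ k ∈ insert k₀ t, L i k * R k j₀) * c j := by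
          simp only [mul_sub, ← mul_assoc, Finset.sum_sub_distrib, Finset.sum_mul]
        _ = ∑ k ∈ insert k₀ t, L i k * R k j := by rw [hcolumn, zero_mul, sub_zero]
    have hcard : (s.erase j₀).card ≤ t.card := by
      refine ih (s.erase j₀) (fun k j => R k j - R k j₀ * c j)
        (fun i hi j hj hij => ?_) (fun i hi => ?_)
      · rw [sum_eliminated i hi j hj]
        exact hoff i (Finset.mem_of_mem_erase hi) j (Finset.mem_of_mem_erase hj) hij
      · rw [sum_eliminated i hi i hi]
        exact hdiag i (Finset.mem_of_mem_erase hi)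
    rw [Finset.card_insert_of_notMem hk₀, ← Finset.card_erase_add_one hj₀]
    exact Nat.succ_le_succ hcard

/-- The condition that a diagonal matrix over `S` with nonzero diagonal entries does not factor
through a smaller dimension. It makes trimmed bideterministic automata over `S` minimal. -/
def DiagonalRankCondition (S : Type*) [Semiring S] : Prop :=
  ∀ ⦃n r : Type⦄ [Fintype n] [Fintype r] (L : Matrix n r S) (R : Matrix r n S),
    (L * R).IsDiag → (∀ i, (L * R) i i ≠ 0) → Fintype.card n ≤ Fintype.card r

namespace DiagonalRankCondition

theorem of_preValuationRing (S : Type*) [Ring S] [PreValuationRing S] :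
    DiagonalRankCondition S := fun _ _ _ _ L R hoff hdiag =>
  card_le_card_of_sum_mul_diagonal Finset.univ Finset.univ L R
    (fun _ _ _ _ hij => hoff hij) (fun i _ => hdiag i)

theorem of_injective {S T : Type*} [Semiring S] [Semiring T] {f : S →+* T}
    (hf : Function.Injective f) (hT : DiagonalRankCondition T) : DiagonalRankCondition S := by
  intro n r _ _ L R hoff hdiag
  refine hT (L.map f) (R.map f) ?_ fun i => ?_ <;> rw [← Matrix.map_mul]
  · exact hoff.map (map_zero f)
  · exact (map_ne_zero_iff f hf).mpr (hdiag i)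

theorem of_isDomain (S : Type*) [CommRing S] [IsDomain S] : DiagonalRankCondition S :=
  of_injective (IsFractionRing.injective S (FractionRing S)) (of_preValuationRing _)

theorem zmod_zero : DiagonalRankCondition (ZMod 0) :=
  of_isDomain ℤ

theorem zmod_prime_pow {p : ℕ} (hp : p.Prime) (k : ℕ) : DiagonalRankCondition (ZMod (p ^ k)) := by
  have : Fact p.Prime := ⟨hp⟩
  let reduction : ℤ_[p] →+* ZMod (p ^ k) := PadicInt.toZModPow k
  have : PreValuationRing (ZMod (p ^ k)) :=
    (ZMod.ringHom_surjective reduction).preValuationRing reduction.toMonoidHom.toMulHom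
  exact of_preValuationRing _

end DiagonalRankCondition

namespace WeightedAutomaton

section Trimming

variable {S : Type} [Semiring S] {α : Type} {A : WeightedAutomaton S α}

/-- The total weight of the runs upon a word that end in a given state, including the initial
weight but not the terminal one. The word is given in reverse, so that its last letter comes
first. -/
def past (A : WeightedAutomaton S α) : List α → A.Q → S
  | [], q => A.ι q
  | c :: u, q => ∑ p : A.Q, A.past u p * A.σ p c q

theorem exists_of_behaviour_ne_zero {w : List α} (h : A.behaviour w ≠ 0) :
    ∃ q, A.ι q ≠ 0 ∧ A.future w q ≠ 0 :=
  let ⟨q, _, hq⟩ := Finset.exists_ne_zero_of_sum_ne_zero h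
  ⟨q, left_ne_zero_of_mul hq, right_ne_zero_of_mul hq⟩

theorem exists_of_future_cons_ne_zero {c : α} {w : List α} {p : A.Q}
    (h : A.future (c :: w) p ≠ 0) : ∃ q, A.σ p c q ≠ 0 ∧ A.future w q ≠ 0 :=
  let ⟨q, _, hq⟩ := Finset.exists_ne_zero_of_sum_ne_zero h
  ⟨q, left_ne_zero_of_mul hq, right_ne_zero_of_mul hq⟩

theorem exists_of_past_cons_ne_zero {c : α} {u : List α} {q : A.Q}
    (h : A.past (c :: u) q ≠ 0) : ∃ p, A.past u p ≠ 0 ∧ A.σ p c q ≠ 0 :=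
  let ⟨p, _, hp⟩ := Finset.exists_ne_zero_of_sum_ne_zero h
  ⟨p, left_ne_zero_of_mul hp, right_ne_zero_of_mul hp⟩

theorem behaviour_reverse_append (A : WeightedAutomaton S α) (u v : List α) :
    A.behaviour (u.reverse ++ v) = ∑ q, A.past u q * A.future v q := by
  induction u generalizing v with
  | nil => simp [past, behaviour]
  | cons c u ih =>
    rw [List.reverse_cons, List.append_assoc, List.singleton_append, ih]
    simp only [future, past, Finset.mul_sum, Finset.sum_mul, mul_assoc]
    exact Finset.sum_comm

namespace Bideterministic

theorem eq_of_past_ne_zero (hA : A.Bideterministic) {u : List α} {p q : A.Q}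
    (hp : A.past u p ≠ 0) (hq : A.past u q ≠ 0) : p = q := by
  induction u generalizing p q with
  | nil => exact hA.1 p q hp hq
  | cons c u ih =>
    obtain ⟨p', hp', hσp⟩ := exists_of_past_cons_ne_zero hp
    obtain ⟨q', hq', hσq⟩ := exists_of_past_cons_ne_zero hq
    obtain rfl : p' = q' := ih hp' hq'
    exact hA.2.2.1 _ _ _ _ hσp hσq

theorem eq_of_future_ne_zero (hA : A.Bideterministic) {v : List α} {p q : A.Q}
    (hp : A.future v p ≠ 0) (hq : A.future v q ≠ 0) : p = q := by
  induction v generalizing p q with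
  | nil => exact hA.2.1 p q hp hq
  | cons c v ih =>
    obtain ⟨p', hσp, hp'⟩ := exists_of_future_cons_ne_zero hp
    obtain ⟨q', hσq, hq'⟩ := exists_of_future_cons_ne_zero hq
    obtain rfl : p' = q' := ih hp' hq'
    exact hA.2.2.2 _ _ _ _ hσp hσq

theorem past_cons_of_σ_ne_zero (hA : A.Bideterministic) (u : List α) {c : α} {p q : A.Q}
    (h : A.σ p c q ≠ 0) : A.past (c :: u) q = A.past u p * A.σ p c q := by
  refine Fintype.sum_eq_single p fun p' hp' => ?_
  have hσ : A.σ p' c q = 0 := by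
    by_contra h'
    exact hp' (hA.2.2.2 _ _ _ _ h' h)
  rw [hσ, mul_zero]

theorem behaviour_reverse_append_of_past_ne_zero (hA : A.Bideterministic) {u : List α} {q : A.Q}
    (hq : A.past u q ≠ 0) (v : List α) :
    A.behaviour (u.reverse ++ v) = A.past u q * A.future v q := by
  rw [behaviour_reverse_append]
  refine Fintype.sum_eq_single q fun p hpq => ?_
  have hp : A.past u p = 0 := by
    by_contra hp
    exact hpq (hA.eq_of_past_ne_zero hp hq)
  rw [hp, zero_mul]

end Bideterministic

/-- A state through which some word has nonzero weight. -/
def Useful (A : WeightedAutomaton S α) (q : A.Q) : Prop :=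
  ∃ u v, A.past u q * A.future v q ≠ 0

/-- The restriction of an automaton to its useful states. -/
noncomputable def trimmed (A : WeightedAutomaton S α) : WeightedAutomaton S α where
  Q := {q : A.Q // A.Useful q}
  fintypeQ := Fintype.ofFinite _
  σ p c q := A.σ p c q
  ι q := A.ι q
  τ q := A.τ q

theorem sum_trimmed {f : A.Q → S} {g : A.trimmed.Q → S} (hf : ∀ q, ¬ A.Useful q → f q = 0)
    (hg : ∀ q : A.trimmed.Q, g q = f q.1) : ∑ q, g q = ∑ q, f q :=
  Fintype.sum_of_injective (fun q : A.trimmed.Q => q.1) Subtype.val_injective g f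
    (fun q hq => hf q fun hq' => hq ⟨⟨q, hq'⟩, rfl⟩) hg

namespace Bideterministic

theorem trimmed (hA : A.Bideterministic) : A.trimmed.Bideterministic :=
  ⟨fun _ _ hp hq => Subtype.ext (hA.1 _ _ hp hq),
    fun _ _ hp hq => Subtype.ext (hA.2.1 _ _ hp hq),
    fun _ _ _ _ hq₁ hq₂ => Subtype.ext (hA.2.2.1 _ _ _ _ hq₁ hq₂),
    fun _ _ _ _ hp₁ hp₂ => Subtype.ext (hA.2.2.2 _ _ _ _ hp₁ hp₂)⟩

-- Trimming may change the futures themselves, for their weight can be killed by that of every past.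
theorem past_mul_future_trimmed (hA : A.Bideterministic) (u v : List α) (q : A.trimmed.Q) :
    A.past u q.1 * A.trimmed.future v q = A.past u q.1 * A.future v q.1 := by
  induction v generalizing u q with
  | nil => rfl
  | cons c v ih =>
    simp only [future, Finset.mul_sum, ← mul_assoc]
    refine sum_trimmed (fun p hp => ?_) (fun p => ?_)
    · by_cases hσ : A.σ q.1 c p = 0
      · simp [hσ]
      · rw [← hA.past_cons_of_σ_ne_zero u hσ]
        by_contra hne
        exact hp ⟨_, _, hne⟩
    · change A.past u q.1 * A.σ q.1 c p.1 * _ = _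
      by_cases hσ : A.σ q.1 c p.1 = 0
      · simp [hσ]
      · rw [← hA.past_cons_of_σ_ne_zero u hσ, ih]

theorem behaviour_trimmed (hA : A.Bideterministic) : A.trimmed.behaviour = A.behaviour := by
  funext w
  refine sum_trimmed (fun q hq => ?_) (hA.past_mul_future_trimmed [] w)
  by_contra hne
  exact hq ⟨[], w, hne⟩

end Bideterministic

theorem card_le_states_of_behaviour_diagonal (hS : DiagonalRankCondition S) {n : Type}
    [Fintype n] (u v : n → List α)
    (hoff : ∀ i j, i ≠ j → A.behaviour ((u i).reverse ++ v j) = 0)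
    (hdiag : ∀ i, A.behaviour ((u i).reverse ++ v i) ≠ 0) : Fintype.card n ≤ A.states := by
  simp only [behaviour_reverse_append] at hoff hdiag
  exact hS (.of fun i => A.past (u i)) (.of fun q j => A.future (v j) q) (fun i j => hoff i j) hdiag

theorem Bideterministic.minimal_trimmed (hA : A.Bideterministic) (hS : DiagonalRankCondition S) :
    A.trimmed.Minimal := by
  intro C hC
  rw [hA.behaviour_trimmed] at hC
  choose u v huv using fun q : A.trimmed.Q => q.2
  have hbehaviour (i j : A.trimmed.Q) :
      C.behaviour ((u i).reverse ++ v j) = A.past (u i) i.1 * A.future (v j) i.1 := by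
    rw [hC, hA.behaviour_reverse_append_of_past_ne_zero (left_ne_zero_of_mul (huv i))]
  refine card_le_states_of_behaviour_diagonal hS u v (fun i j hij => ?_) (fun i => ?_)
  · have hfuture : A.future (v j) i.1 = 0 := by
      by_contra hne
      exact hij (Subtype.ext (hA.eq_of_future_ne_zero hne (right_ne_zero_of_mul (huv j))))
    rw [hbehaviour, hfuture, mul_zero]
  · rw [hbehaviour]
    exact huv i

end Trimming

section Conjugacy

open Matrix

variable {S : Type} [Semiring S] {α : Type} {A B : WeightedAutomaton S α}

/-- The matrix of the weights of the transitions upon a letter. -/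
def transitionMatrix (A : WeightedAutomaton S α) (c : α) : Matrix A.Q A.Q S :=
  .of fun p q => A.σ p c q

theorem future_cons (c : α) (w : List α) :
    A.future (c :: w) = A.transitionMatrix c *ᵥ A.future w :=
  rfl

theorem behaviour_eq_dotProduct (w : List α) : A.behaviour w = A.ι ⬝ᵥ A.future w :=
  rfl

theorem behaviour_eq_of_conjugate (X : Matrix A.Q B.Q S) (hι : A.ι ᵥ* X = B.ι)
    (hσ : ∀ c, A.transitionMatrix c * X = X * B.transitionMatrix c) (hτ : A.τ = X *ᵥ B.τ) :
    A.behaviour = B.behaviour := by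
  have hfuture (w : List α) : A.future w = X *ᵥ B.future w := by
    induction w with
    | nil => exact hτ
    | cons c w ih => rw [future_cons, future_cons, ih, mulVec_mulVec, hσ, ← mulVec_mulVec]
  funext w
  rw [behaviour_eq_dotProduct, behaviour_eq_dotProduct, hfuture, dotProduct_mulVec, hι]

end Conjugacy

section Idempotents

open Matrix

variable {S : Type} [CommSemiring S] {α : Type}

namespace Bideterministic

theorem σ_self_eq_zero {A : WeightedAutomaton S α} (hA : A.Bideterministic) {z : A.Q} {c : α}
    (hι : A.ι z ≠ 0) (hτ : A.τ z ≠ 0) (hnil : A.behaviour [] = 1) (hc : A.behaviour [c] = 0) :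
    A.σ z c z = 0 := by
  have hι_ne (q : A.Q) (hq : q ≠ z) : A.ι q = 0 := by
    by_contra h
    exact hq (hA.1 _ _ h hι)
  have hτ_ne (q : A.Q) (hq : q ≠ z) : A.τ q = 0 := by
    by_contra h
    exact hq (hA.2.1 _ _ h hτ)
  have hbehaviour (w : List α) : A.behaviour w = A.ι z * A.future w z :=
    Fintype.sum_eq_single z fun q hq => by rw [hι_ne q hq, zero_mul]
  have hfuture : A.future [c] z = A.σ z c z * A.τ z :=
    Fintype.sum_eq_single z fun q hq => by rw [future, hτ_ne q hq, mul_zero]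
  have hunit : A.ι z * A.τ z = 1 := by rw [← hnil, hbehaviour, future]
  calc A.σ z c z
    _ = A.σ z c z * (A.ι z * A.τ z) := by rw [hunit, mul_one]
    _ = A.ι z * (A.σ z c z * A.τ z) := mul_left_comm _ _ _
    _ = 0 := by rw [← hfuture, ← hbehaviour, hc]

theorem two_lt_states_of_behaviour {A : WeightedAutomaton S α} (hA : A.Bideterministic)
    {a b : α} (hnil : A.behaviour [] = 1) (ha : A.behaviour [a] = 0) (hb : A.behaviour [b] = 0)
    (haa : A.behaviour [a, a] ≠ 0) (hbab : A.behaviour [b, a, b] ≠ 0) : 2 < A.states := by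
  have : Nontrivial S := nontrivial_of_ne _ _ haa
  obtain ⟨z, hι, hτ⟩ := exists_of_behaviour_ne_zero (hnil.trans_ne one_ne_zero)
  have exists_step {c : α} {w : List α} (h : A.behaviour (c :: w) ≠ 0) :
      ∃ q, A.σ z c q ≠ 0 ∧ A.future w q ≠ 0 := by
    obtain ⟨z', hz', h'⟩ := exists_of_behaviour_ne_zero h
    exact exists_of_future_cons_ne_zero (hA.1 z' z hz' hι ▸ h')
  have σ_to_terminal {c : α} {q : A.Q} (h : A.future [c] q ≠ 0) : A.σ q c z ≠ 0 := by
    obtain ⟨z', hσ, hz'⟩ := exists_of_future_cons_ne_zero h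
    exact hA.2.1 z' z hz' hτ ▸ hσ
  obtain ⟨s, hzs, hs⟩ := exists_step haa
  obtain ⟨t, hzt, ht⟩ := exists_step hbab
  have hsz : z ≠ s := by
    rintro rfl
    exact hzs (hA.σ_self_eq_zero hι hτ hnil ha)
  have htz : z ≠ t := by
    rintro rfl
    exact hzt (hA.σ_self_eq_zero hι hτ hnil hb)
  have hst : s ≠ t := by
    rintro rfl
    -- The run upon `bab` is `z → s → z → s`, which is not terminal.
    obtain ⟨z', hsz', hz'⟩ := exists_of_future_cons_ne_zero ht
    obtain rfl : z' = z := hA.2.2.1 _ _ _ _ hsz' (σ_to_terminal hs)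
    exact σ_to_terminal hz' (hA.σ_self_eq_zero hι hτ hnil hb)
  exact Fintype.two_lt_card_iff.mpr ⟨z, s, t, hsz, htz, hst⟩

end Bideterministic

/-- A three-state bideterministic automaton whose state `0` is both initial and terminal. Upon
`true`, the states `0` and `1` are exchanged with weight `x` and the state `2` has a loop of weight
`y`; upon `false`, the states `0` and `2` are exchanged with weight `y`. -/
def splitAutomaton (x y : S) : WeightedAutomaton S Bool where
  Q := Fin 3
  σ p c q := bif c then !![0, x, 0; x, 0, 0; 0, 0, y] p q else !![0, 0, y; 0, 0, 0; y, 0, 0] p q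
  ι := ![1, 0, 0]
  τ := ![1, 0, 0]

/-- The two-state automaton obtained from `splitAutomaton x y` by merging the states `1` and `2`. -/
def mergedAutomaton (x y : S) : WeightedAutomaton S Bool where
  Q := Fin 2
  σ p c q := bif c then !![0, x; x, y] p q else !![0, y; y, 0] p q
  ι := ![1, 0]
  τ := ![1, 0]

theorem bideterministic_splitAutomaton (x y : S) : (splitAutomaton x y).Bideterministic := by
  refine ⟨?_, ?_, ?_, ?_⟩
  · change ∀ p q : Fin 3, _
    simp [Fin.forall_fin_succ, splitAutomaton]
  · change ∀ p q : Fin 3, _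
    simp [Fin.forall_fin_succ, splitAutomaton]
  · change ∀ (p : Fin 3) (c : Bool) (q q' : Fin 3), _
    simp [Fin.forall_fin_succ, splitAutomaton]
  · change ∀ (p p' : Fin 3) (c : Bool) (q : Fin 3), _
    simp [Fin.forall_fin_succ, splitAutomaton]

theorem behaviour_mergedAutomaton {x y : S} (hx : IsIdempotentElem x) (hy : IsIdempotentElem y)
    (hxy : x * y = 0) : (mergedAutomaton x y).behaviour = (splitAutomaton x y).behaviour := by
  have hyx : y * x = 0 := by rw [mul_comm, hxy]
  let X : Matrix (Fin 2) (Fin 3) S := !![1, 0, 0; 0, x, y]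
  refine behaviour_eq_of_conjugate (A := mergedAutomaton x y) (B := splitAutomaton x y)
    X ?_ (fun c => ?_) ?_
  · change ![1, 0] ᵥ* X = ![1, 0, 0]
    ext i; fin_cases i <;> simp [X]
  · cases c
    · change !![0, y; y, 0] * X = X * !![0, 0, y; 0, 0, 0; y, 0, 0]
      ext i j; fin_cases i <;> fin_cases j <;> simp [X, hyx, hy.eq]
    · change !![0, x; x, y] * X = X * !![0, x, 0; x, 0, 0; 0, 0, y]
      ext i j; fin_cases i <;> fin_cases j <;> simp [X, hxy, hyx, hx.eq, hy.eq]
  · change ![1, 0] = X *ᵥ ![1, 0, 0]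
    ext i; fin_cases i <;> simp [X]

theorem sum_splitAutomaton {x y : S} (f : (splitAutomaton x y).Q → S) :
    ∑ q, f q = f (0 : Fin 3) + f (1 : Fin 3) + f (2 : Fin 3) :=
  Fin.sum_univ_three f

theorem not_minimal_of_behaviour_eq_splitAutomaton {x y : S} (hx : IsIdempotentElem x)
    (hy : IsIdempotentElem y) (hxy : x * y = 0) (hx₀ : x ≠ 0) (hy₀ : y ≠ 0)
    {B : WeightedAutomaton S Bool} (hB : B.behaviour = (splitAutomaton x y).behaviour)
    (hbi : B.Bideterministic) : ¬ B.Minimal := by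
  intro hmin
  have hle : B.states ≤ 2 := hmin (mergedAutomaton x y) <| by
    rw [behaviour_mergedAutomaton hx hy hxy, hB]
  refine hle.not_gt (hbi.two_lt_states_of_behaviour (a := true) (b := false) ?_ ?_ ?_ ?_ ?_) <;>
    rw [hB] <;> simp only [behaviour, future, sum_splitAutomaton] <;>
    simp [splitAutomaton, hx.eq, hy.eq, hx₀, hy₀]

end Idempotents

end WeightedAutomaton

theorem exists_orthogonal_idempotents_zmod_mul {a b : ℕ} (ha : 1 < a) (hb : 1 < b)
    (hab : a.Coprime b) : ∃ x y : ZMod (a * b),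
      IsIdempotentElem x ∧ IsIdempotentElem y ∧ x * y = 0 ∧ x ≠ 0 ∧ y ≠ 0 := by
  have : Fact (1 < a) := ⟨ha⟩
  have : Fact (1 < b) := ⟨hb⟩
  let e := (ZMod.chineseRemainder hab).symm
  refine ⟨e (1, 0), e (0, 1), ?_, ?_, ?_, ?_, ?_⟩ <;> simp [IsIdempotentElem, ← map_mul]

theorem exists_coprime_factors {m : ℕ} (hm : m ≠ 0) (hpow : ¬ ∃ p k : ℕ, p.Prime ∧ m = p ^ k) :
    ∃ a b : ℕ, 1 < a ∧ 1 < b ∧ a.Coprime b ∧ m = a * b := by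
  induction m using Nat.recOnPosPrimePosCoprime with
  | zero => exact absurd rfl hm
  | one => exact absurd ⟨2, 0, Nat.prime_two, rfl⟩ hpow
  | prime_pow p k hp => exact absurd ⟨p, k, hp, rfl⟩ hpow
  | coprime a b ha hb hab => exact ⟨a, b, ha, hb, hab, rfl⟩

/-- For `m : ℕ`, every bideterministic weighted automaton over `ZMod m` admits
an equivalent minimal automaton that is bideterministic if and only if `m = 0`
or `m` is a prime power `p^k` with `k ∈ ℕ`. -/
theorem bideterministic_minimal_equivalent_zmod_iff
    (m : ℕ) :
    (∀ (α : Type) (_ : Fintype α) (_ : Nonempty α)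
        (A : WeightedAutomaton (ZMod m) α), A.Bideterministic →
        ∃ B : WeightedAutomaton (ZMod m) α,
          B.behaviour = A.behaviour ∧ B.Bideterministic ∧ B.Minimal) ↔
      (m = 0 ∨ ∃ (p k : ℕ), p.Prime ∧ m = p ^ k) := by
  constructor
  · intro h
    by_contra hm
    rw [not_or] at hm
    obtain ⟨a, b, ha, hb, hab, rfl⟩ := exists_coprime_factors hm.1 hm.2
    obtain ⟨x, y, hx, hy, hxy, hx₀, hy₀⟩ := exists_orthogonal_idempotents_zmod_mul ha hb hab
    obtain ⟨B, hB, hbi, hmin⟩ := h Bool inferInstance inferInstance _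
      (WeightedAutomaton.bideterministic_splitAutomaton x y)
    exact WeightedAutomaton.not_minimal_of_behaviour_eq_splitAutomaton hx hy hxy hx₀ hy₀ hB hbi hmin
  · intro hm α _ _ A hA
    have hrank : DiagonalRankCondition (ZMod m) := by
      rcases hm with rfl | ⟨p, k, hp, rfl⟩
      · exact .zmod_zero
      · exact .zmod_prime_pow hp k
    exact ⟨A.trimmed, hA.behaviour_trimmed, hA.trimmed, hA.minimal_trimmed hrank⟩
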